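/- In the braid group B_n, for every q ≥ 1 and all integers 2 ≤ a_1 < a_2 < ⋯ < a_q ≤ n, one has U_{a_1}·U_{a_2}·⋯·U_{a_q} = (D_{a_1}·D_{a_2}·⋯·D_{a_q})·(E_{a_q}·⋯·E_{a_2}·E_{a_1}). -/

import Mathlib

/-- The braid relations on `m` generators (so that `σ_1, …, σ_m` present the braid
group `B_{m+1}`); generator `i : Fin m` corresponds to `σ_{i+1}`. -/
def braidRels (m : ℕ) : Set (FreeGroup (Fin m)) :=
  {r | ∃ i j : Fin m, (i.val + 2 ≤ j.val ∨ j.val + 2 ≤ i.val) ∧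
        r = FreeGroup.of i * FreeGroup.of j * (FreeGroup.of i)⁻¹ * (FreeGroup.of j)⁻¹}
  ∪ {r | ∃ i j : Fin m, (i.val + 1 = j.val ∨ j.val + 1 = i.val) ∧
        r = FreeGroup.of i * FreeGroup.of j * FreeGroup.of i *
            (FreeGroup.of j * FreeGroup.of i * FreeGroup.of j)⁻¹}

/-- The braid group `B n` on `n` strands, presented with generators `σ_1, …, σ_{n-1}`. -/
abbrev BraidGroup (n : ℕ) : Type := PresentedGroup (braidRels (n - 1))

namespace BraidGroup

/-- The Artin generator `σ_i` of `B n` for `1 ≤ i ≤ n - 1` (junk value `1` otherwise). -/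
def σ (n i : ℕ) : BraidGroup n :=
  if h : 1 ≤ i ∧ i ≤ n - 1 then PresentedGroup.of (⟨i - 1, by omega⟩ : Fin (n - 1)) else 1

/-- `D n k = σ_{k-1} ⋯ σ_2 σ_1` in `B n`; `D n 1 = 1`. -/
def D (n k : ℕ) : BraidGroup n :=
  (((List.range (k - 1)).reverse).map (fun j => σ n (j + 1))).prod

/-- `E n k = σ_1 σ_2 ⋯ σ_{k-1}` in `B n`; `E n 1 = 1`. -/
def E (n k : ℕ) : BraidGroup n :=
  ((List.range (k - 1)).map (fun j => σ n (j + 1))).prod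

/-- `U n k = D n k * E n k` in `B n`; `U n 1 = 1`. -/
def U (n k : ℕ) : BraidGroup n := D n k * E n k

/-- `δ = σ_{n-1} σ_{n-2} ⋯ σ_1` in `B n`. -/
def delta (n : ℕ) : BraidGroup n := D n n

/-- `Δ = σ_1 (σ_2 σ_1) ⋯ (σ_{n-1} ⋯ σ_1) = D_2 D_3 ⋯ D_n` in `B n`. -/
def Delta (n : ℕ) : BraidGroup n :=
  ((List.range (n - 1)).map (fun j => D n (j + 2))).prod

end BraidGroup

/-!
Write `U_{k+1} = σ_k U_k σ_k`. The braid relation, applied at both ends of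
`U_{i+2} = σ_{i+1} σ_i U_i σ_i σ_{i+1}`, moves `σ_i` across it because `U_i` commutes with
`σ_{i+1}`; the `σ_k` added later commute with `σ_i`. Hence `U_k` commutes with
`σ_1, …, σ_{k-2}`, and so with `E_j` for `j < k`. Each `E_{a_i}` in `∏ D_{a_i} E_{a_i}` can
therefore be moved to the right of all later factors.
-/

theorem prod_map_mul_of_pairwise_commute {ι M : Type*} [Monoid M] {l : List ι} {d e : ι → M}
    (h : l.Pairwise fun i j => Commute (e i) (d j * e j)) :
    (l.map fun i => d i * e i).prod = (l.map d).prod * (l.reverse.map e).prod := by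
  induction l with
  | nil => simp
  | cons i l ih =>
    obtain ⟨hi, hl⟩ := List.pairwise_cons.mp h
    have hcomm : Commute (e i) (l.map fun j => d j * e j).prod :=
      Commute.list_prod_right _ _ (List.forall_mem_map.mpr hi)
    calc ((i :: l).map fun j => d j * e j).prod
        = d i * (e i * (l.map fun j => d j * e j).prod) := by
          rw [List.map_cons, List.prod_cons, mul_assoc]
      _ = d i * ((l.map d).prod * (l.reverse.map e).prod * e i) := by rw [hcomm.eq, ih hl]
      _ = ((i :: l).map d).prod * ((i :: l).reverse.map e).prod := by simp [mul_assoc]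

theorem commute_sandwich_of_braid {S : Type*} [Semigroup S] {x y u : S}
    (hxy : x * y * x = y * x * y) (hu : Commute u y) :
    Commute x (y * (x * u * x) * y) :=
  calc x * (y * (x * u * x) * y)
      = (x * y * x) * u * x * y := by simp only [mul_assoc]
    _ = y * x * (y * u) * x * y := by rw [hxy]; simp only [mul_assoc]
    _ = y * x * u * (y * x * y) := by rw [← hu.eq]; simp only [mul_assoc]
    _ = y * (x * u * x) * y * x := by rw [← hxy]; simp only [mul_assoc]

namespace BraidGroup

variable {n i j k : ℕ}

@[simp]
theorem σ_zero : σ n 0 = 1 := rfl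

theorem commute_σ_σ (hij : i + 2 ≤ j) : Commute (σ n i) (σ n j) := by
  unfold σ
  split_ifs with hi hj
  · refine PresentedGroup.mk_eq_mk_of_mul_inv_mem
      (Or.inl ⟨⟨i - 1, by lia⟩, ⟨j - 1, by lia⟩, Or.inl (by dsimp only; lia), ?_⟩)
    rw [mul_inv_rev, ← mul_assoc]
  · exact Commute.one_right _
  all_goals exact Commute.one_left _

theorem σ_braid (hi : 1 ≤ i) (hin : i + 1 < n) :
    σ n i * σ n (i + 1) * σ n i = σ n (i + 1) * σ n i * σ n (i + 1) := by
  unfold σ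
  rw [dif_pos (by lia), dif_pos (by lia)]
  exact PresentedGroup.mk_eq_mk_of_mul_inv_mem
    (Or.inr ⟨⟨i - 1, by lia⟩, ⟨i, by lia⟩, Or.inl (Nat.sub_add_cancel hi), rfl⟩)

@[simp]
theorem U_zero : U n 0 = 1 := by simp [U, D, E]

-- At `k = 0` this reads `1 = 1`: `σ n 0`, `U n 0` and `U n 1` are all `1`.
theorem U_succ : U n (k + 1) = σ n k * U n k * σ n k := by
  cases k <;> simp [U, D, E, List.range_succ, mul_assoc]

theorem commute_U_σ_of_lt (hkj : k < j) : Commute (U n k) (σ n j) := by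
  induction k with
  | zero => simp
  | succ k ih =>
    have hσ : Commute (σ n k) (σ n j) := commute_σ_σ hkj
    rw [U_succ]
    exact (hσ.mul_left (ih (by lia))).mul_left hσ

theorem commute_σ_U_of_lt (hik : i + 1 < k) (hkn : k ≤ n) : Commute (σ n i) (U n k) := by
  induction k, hik using Nat.le_induction with
  | base =>
    rcases Nat.eq_zero_or_pos i with rfl | hi
    · simp
    · rw [U_succ, U_succ]
      exact commute_sandwich_of_braid (σ_braid hi hkn) (commute_U_σ_of_lt i.lt_succ_self)
  | succ k hik ih =>
    have hσ : Commute (σ n i) (σ n k) := commute_σ_σ hik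
    rw [U_succ]
    exact (hσ.mul_right (ih (by lia))).mul_right hσ

theorem commute_E_U_of_lt (hjk : j < k) (hkn : k ≤ n) : Commute (E n j) (U n k) := by
  refine Commute.list_prod_left _ _ (List.forall_mem_map.mpr fun i hi => ?_)
  rw [List.mem_range] at hi
  exact commute_σ_U_of_lt (by lia) hkn

end BraidGroup

/-- **Lemma (DEU (iv)).** In `B n`, for `q ≥ 1` and `2 ≤ a_1 < a_2 < ⋯ < a_q ≤ n`,
`U_{a_1} U_{a_2} ⋯ U_{a_q} = (D_{a_1} D_{a_2} ⋯ D_{a_q}) · (E_{a_q} ⋯ E_{a_2} E_{a_1})`. -/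
theorem U_prod_eq_D_prod_E_prod (n q : ℕ) (hq : 1 ≤ q) (a : ℕ → ℕ)
    (ha2 : 2 ≤ a 1) (hmono : ∀ i, 1 ≤ i → i < q → a i < a (i + 1)) (han : a q ≤ n) :
    ((List.range q).map (fun j => BraidGroup.U n (a (j + 1)))).prod =
      ((List.range q).map (fun j => BraidGroup.D n (a (j + 1)))).prod *
        (((List.range q).reverse).map (fun j => BraidGroup.E n (a (j + 1)))).prod := by
  have ha : StrictMonoOn a (Set.Icc 1 q) :=
    strictMonoOn_of_lt_add_one Set.ordConnected_Icc fun i _ hi hi' => hmono i hi.1 hi'.2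
  refine prod_map_mul_of_pairwise_commute
    (List.pairwise_lt_range.imp_of_mem fun {i j} hi hj hij => ?_)
  rw [List.mem_range] at hi hj
  have hlt : a (i + 1) < a (j + 1) := ha ⟨by lia, hi⟩ ⟨by lia, hj⟩ (by lia)
  have hle : a (j + 1) ≤ n := (ha.monotoneOn ⟨by lia, hj⟩ ⟨hq, le_rfl⟩ hj).trans han
  exact BraidGroup.commute_E_U_of_lt hlt hle
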